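/- Let y ∈ V^n be a probability vector with positive components and let k be a positive integer. The following three statements are equivalent: (1) T_k(y) = S(y); (2) M_k(y) = S(y); (3) for every d with 1 < d < n−1, either y_d^k ≥ y_1^{k−1} y_{d+1} or y_{d+1}^k ≤ y_n^{k−1} y_d. -/

import Mathlib

noncomputable section

/-- `eSum x l` : the sum of the `l` largest components of `x`. -/
def eSum {n : ℕ} (x : Fin n → ℝ) (l : ℕ) : ℝ :=
  sSup {r | ∃ s : Finset (Fin n), s.card = l ∧ r = ∑ i ∈ s, x i}

/-- `ESum x l` : the sum of the `l` smallest components of `x`. -/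
def ESum {n : ℕ} (x : Fin n → ℝ) (l : ℕ) : ℝ :=
  sInf {r | ∃ s : Finset (Fin n), s.card = l ∧ r = ∑ i ∈ s, x i}

/-- Majorization `x ≺ y` (for vectors with equal total sum):
`e_l(x) ≤ e_l(y)` for all `1 ≤ l ≤ n`. -/
def Maj {n : ℕ} (x y : Fin n → ℝ) : Prop :=
  (∑ i, x i) = (∑ i, y i) ∧ ∀ l : ℕ, 1 ≤ l → l ≤ n → eSum x l ≤ eSum y l

/-- Strict majorization `x ◁ y`: equal total sums and `e_l(x) < e_l(y)` for all
`1 ≤ l ≤ n - 1`. -/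
def SMaj {n : ℕ} (x y : Fin n → ℝ) : Prop :=
  (∑ i, x i) = (∑ i, y i) ∧ ∀ l : ℕ, 1 ≤ l → l + 1 ≤ n → eSum x l < eSum y l

/-- Super-majorization `x ≺ʷ y` : `E_l(x) ≥ E_l(y)` for all `1 ≤ l ≤ n`. -/
def SupMaj {n : ℕ} (x y : Fin n → ℝ) : Prop :=
  ∀ l : ℕ, 1 ≤ l → l ≤ n → ESum y l ≤ ESum x l

/-- Strict super-majorization `x ◁ʷ y` : `E_l(x) > E_l(y)` for all `1 ≤ l ≤ n`. -/
def SSupMaj {n : ℕ} (x y : Fin n → ℝ) : Prop :=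
  ∀ l : ℕ, 1 ≤ l → l ≤ n → ESum y l < ESum x l

/-- Tensor product of two vectors: the vector of all pairwise products. -/
def tensor {m k : ℕ} (x : Fin m → ℝ) (c : Fin k → ℝ) : Fin (m * k) → ℝ :=
  fun i => x (finProdFinEquiv.symm i).1 * c (finProdFinEquiv.symm i).2

/-- `k`-fold tensor power of a vector. -/
def tpow {n : ℕ} (x : Fin n → ℝ) (k : ℕ) : Fin (n ^ k) → ℝ :=
  fun i => ∏ j : Fin k, x (finFunctionFinEquiv.symm i j)

/-- `V^n` : probability vectors with components in non-increasing order. -/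
def Vn (n : ℕ) : Set (Fin n → ℝ) :=
  {x | (∀ i, 0 ≤ x i) ∧ (∑ i, x i) = 1 ∧ Antitone x}

/-- `S(y)` : members of `V^n` majorized by `y`. -/
def Sset {n : ℕ} (y : Fin n → ℝ) : Set (Fin n → ℝ) :=
  {x ∈ Vn n | Maj x y}

/-- `T(y,c)` : members of `V^n` with `x ⊗ c ≺ y ⊗ c`. -/
def Tcat {n k : ℕ} (y : Fin n → ℝ) (c : Fin k → ℝ) : Set (Fin n → ℝ) :=
  {x ∈ Vn n | Maj (tensor x c) (tensor y c)}

/-- Local uniformity `l_u(c)` : the minimum of the consecutive ratios `c_{i+1}/c_i`. -/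
def lu {k : ℕ} (c : Fin k → ℝ) : ℝ :=
  sInf {r | ∃ i : ℕ, ∃ h : i + 1 < k, r = c ⟨i + 1, h⟩ / c ⟨i, Nat.lt_of_succ_lt h⟩}

/-- Global uniformity `g_u(c) = c_k / c_1` (smallest over largest component of a
non-increasingly ordered vector). -/
def gu {k : ℕ} (c : Fin k → ℝ) : ℝ :=
  if h : 0 < k then c ⟨k - 1, Nat.sub_lt h Nat.one_pos⟩ / c ⟨0, h⟩ else 1

/-- Largest component. -/
def maxc {n : ℕ} (x : Fin n → ℝ) : ℝ := sSup (Set.range x)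

/-- Smallest component. -/
def minc {n : ℕ} (x : Fin n → ℝ) : ℝ := sInf (Set.range x)

/-- `c'` is a (contiguous) segment of `c`. -/
def IsSegment {j k : ℕ} (c' : Fin j → ℝ) (c : Fin k → ℝ) : Prop :=
  ∃ (i : ℕ) (_h : i + j ≤ k), ∀ t : Fin j, c' t = c ⟨i + t, by have := t.isLt; omega⟩

/-- The first `d` components of a vector. -/
def take {n : ℕ} (x : Fin n → ℝ) (d : ℕ) (h : d ≤ n) : Fin d → ℝ :=
  fun i => x ⟨i, Nat.lt_of_lt_of_le i.isLt h⟩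

/-- The components of a vector after the first `d` ones. -/
def drop {n : ℕ} (x : Fin n → ℝ) (d : ℕ) : Fin (n - d) → ℝ :=
  fun i => x ⟨d + i, by have := i.isLt; omega⟩

/-- The segment `(c_i, …, c_j)` of `c` (`0`-based indices). -/
def seg {k : ℕ} (c : Fin k → ℝ) (i j : ℕ) (hij : i ≤ j) (hj : j < k) :
    Fin (j - i + 1) → ℝ :=
  fun t => c ⟨i + t, by have := t.isLt; omega⟩

/-- `(c_i, …, c_j)` is a block of the decomposition `[c]_α` of the (positive,
non-increasingly ordered) vector `c` according to `α`: ratios within the block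
exceed `α`, and the ratios at the two boundaries of the block are `≤ α`
(or the block touches an end of `c`). -/
def IsBlock {k : ℕ} (α : ℝ) (c : Fin k → ℝ) (i j : ℕ) : Prop :=
  ∃ (hij : i ≤ j) (hj : j < k),
    (i = 0 ∨ c ⟨i, by omega⟩ / c ⟨i - 1, by omega⟩ ≤ α) ∧
    (j = k - 1 ∨ ∃ hj1 : j + 1 < k, c ⟨j + 1, hj1⟩ / c ⟨j, hj⟩ ≤ α) ∧
    (∀ (t : ℕ) (ht1 : i ≤ t) (ht2 : t < j), α < c ⟨t + 1, by omega⟩ / c ⟨t, by omega⟩)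

/-- `T_k(y)` : states transformable to `y` with a `k`-dimensional catalyst. -/
def Tk {n : ℕ} (k : ℕ) (y : Fin n → ℝ) : Set (Fin n → ℝ) :=
  {x ∈ Vn n | ∃ c : Fin k → ℝ, (∀ i, 0 < c i) ∧ (∑ i, c i) = 1 ∧ Antitone c ∧
    Maj (tensor x c) (tensor y c)}

/-- `M_k(y)` : states `x` with `x^{⊗k} ≺ y^{⊗k}`. -/
def Mk {n : ℕ} (k : ℕ) (y : Fin n → ℝ) : Set (Fin n → ℝ) :=
  {x ∈ Vn n | Maj (tpow x k) (tpow y k)}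

/-- `T(y)` : states transformable to `y` with some catalyst. -/
def Tinf {n : ℕ} (y : Fin n → ℝ) : Set (Fin n → ℝ) :=
  {x ∈ Vn n | ∃ (k : ℕ) (c : Fin k → ℝ), 0 < k ∧ (∀ i, 0 < c i) ∧ (∑ i, c i) = 1 ∧
    Antitone c ∧ Maj (tensor x c) (tensor y c)}

/-- `M(y)` : states `x` with `x^{⊗k} ≺ y^{⊗k}` for some `k ≥ 1`. -/
def Minf {n : ℕ} (y : Fin n → ℝ) : Set (Fin n → ℝ) :=
  {x ∈ Vn n | ∃ k : ℕ, 1 ≤ k ∧ Maj (tpow x k) (tpow y k)}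

/-- `S^λ(y)` : states `x` with `x ≺ʷ λ y`. -/
def Slam {n : ℕ} (lam : ℝ) (y : Fin n → ℝ) : Set (Fin n → ℝ) :=
  {x ∈ Vn n | SupMaj x (fun i => lam * y i)}

/-- `T^λ(y,c)` : states `x` with `x ⊗ c ≺ʷ λ (y ⊗ c)`. -/
def Tlamc {n k : ℕ} (lam : ℝ) (y : Fin n → ℝ) (c : Fin k → ℝ) : Set (Fin n → ℝ) :=
  {x ∈ Vn n | SupMaj (tensor x c) (fun i => lam * tensor y c i)}

/-- `T_k^λ(y)`. -/
def Tklam {n : ℕ} (k : ℕ) (lam : ℝ) (y : Fin n → ℝ) : Set (Fin n → ℝ) :=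
  {x ∈ Vn n | ∃ c : Fin k → ℝ, (∀ i, 0 < c i) ∧ (∑ i, c i) = 1 ∧ Antitone c ∧
    SupMaj (tensor x c) (fun i => lam * tensor y c i)}

/-- `M_k^λ(y)`. -/
def Mklam {n : ℕ} (k : ℕ) (lam : ℝ) (y : Fin n → ℝ) : Set (Fin n → ℝ) :=
  {x ∈ Vn n | SupMaj (tpow x k) (fun i => lam ^ k * tpow y k i)}

/-- `T^λ(y)`. -/
def Tlaminf {n : ℕ} (lam : ℝ) (y : Fin n → ℝ) : Set (Fin n → ℝ) :=
  {x ∈ Vn n | ∃ (k : ℕ) (c : Fin k → ℝ), 0 < k ∧ (∀ i, 0 < c i) ∧ (∑ i, c i) = 1 ∧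
    Antitone c ∧ SupMaj (tensor x c) (fun i => lam * tensor y c i)}

/-- `M^λ(y)`. -/
def Mlaminf {n : ℕ} (lam : ℝ) (y : Fin n → ℝ) : Set (Fin n → ℝ) :=
  {x ∈ Vn n | ∃ k : ℕ, 1 ≤ k ∧ SupMaj (tpow x k) (fun i => lam ^ k * tpow y k i)}

/-- `K_d(y)` : concatenations `x = x' ⊕ x''` with `x' ◁ y'` and `x'' ◁ y''`,
where `y'` is the first-`d` part of `y` and `y''` the rest. -/
def Kd {n : ℕ} (y : Fin n → ℝ) (d : ℕ) (h : d ≤ n) : Set (Fin n → ℝ) :=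
  {x ∈ Vn n | SMaj (take x d h) (take y d h) ∧ SMaj (drop x d) (drop y d)}

/-- `y(d)` : first `d` components equal to `e_d(y)/d`, the last `n-d` equal to
`(1 - e_d(y))/(n-d)`. -/
def yvec {n : ℕ} (y : Fin n → ℝ) (d : ℕ) : Fin n → ℝ :=
  fun i => if (i : ℕ) < d then eSum y d / d else (1 - eSum y d) / (n - d)

/-- `K_d^λ(y)` : states `x ∈ S^λ(y)` with `E_l(x) = λ E_l(y)` iff `l = n - d`. -/
def Kdlam {n : ℕ} (lam : ℝ) (y : Fin n → ℝ) (d : ℕ) : Set (Fin n → ℝ) :=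
  {x ∈ Vn n | SupMaj x (fun i => lam * y i) ∧
    ∀ l : ℕ, 1 ≤ l → l ≤ n → (ESum x l = lam * ESum y l ↔ l = n - d)}

open Finset Filter Topology

section Majorization

variable {ι κ β : Type*} [Fintype ι] [Fintype κ] [Fintype β]

/-- Majorization of real families indexed by an arbitrary finite type. -/
def MajOn (x y : ι → ℝ) : Prop :=
  ∑ i, x i = ∑ i, y i ∧ ∀ s : Finset ι, ∃ t : Finset ι, t.card = s.card ∧
    ∑ i ∈ s, x i ≤ ∑ i ∈ t, y i

lemma eSum_set_finite {n : ℕ} (x : Fin n → ℝ) (l : ℕ) :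
    {r | ∃ s : Finset (Fin n), s.card = l ∧ r = ∑ i ∈ s, x i}.Finite :=
  (Set.finite_range (fun s : Finset (Fin n) => ∑ i ∈ s, x i)).subset
    (by rintro r ⟨s, -, rfl⟩; exact ⟨s, rfl⟩)

lemma eSum_set_nonempty {n : ℕ} (x : Fin n → ℝ) {l : ℕ} (hl : l ≤ n) :
    {r | ∃ s : Finset (Fin n), s.card = l ∧ r = ∑ i ∈ s, x i}.Nonempty := by
  obtain ⟨s, -, hs⟩ := Finset.exists_subset_card_eq
    (s := (univ : Finset (Fin n))) (n := l) (by simpa using hl)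
  exact ⟨_, s, hs, rfl⟩

lemma maj_iff_majOn {n : ℕ} (x y : Fin n → ℝ) : Maj x y ↔ MajOn x y := by
  refine and_congr_right fun _ => ⟨fun h s => ?_, fun h l _ hl => ?_⟩
  · have hs : s.card ≤ n := by simpa using s.card_le_univ
    rcases Nat.eq_zero_or_pos s.card with h0 | h0
    · exact ⟨s, rfl, by rw [Finset.card_eq_zero.1 h0]; simp⟩
    · obtain ⟨t, ht, hty⟩ := (eSum_set_nonempty y hs).csSup_mem (eSum_set_finite y s.card)
      refine ⟨t, ht, ?_⟩
      rw [← hty]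
      exact (le_csSup (eSum_set_finite x s.card).bddAbove ⟨s, rfl, rfl⟩).trans (h _ h0 hs)
  · refine csSup_le (eSum_set_nonempty x hl) ?_
    rintro r ⟨s, hs, rfl⟩
    obtain ⟨t, ht, hle⟩ := h s
    exact hle.trans (le_csSup (eSum_set_finite y l).bddAbove ⟨t, ht.trans hs, rfl⟩)

lemma MajOn.comp_equiv {x y : ι → ℝ} (h : MajOn x y) (e : κ ≃ ι) :
    MajOn (x ∘ e) (y ∘ e) := by
  refine ⟨by simpa only [Function.comp_apply, Equiv.sum_comp e] using h.1, fun s => ?_⟩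
  obtain ⟨t, ht, hle⟩ := h.2 (s.map e.toEmbedding)
  refine ⟨t.map e.symm.toEmbedding, by simpa using ht, ?_⟩
  simpa using hle

lemma majOn_comp_equiv (x y : ι → ℝ) (e : κ ≃ ι) :
    MajOn (x ∘ e) (y ∘ e) ↔ MajOn x y := by
  refine ⟨fun h => ?_, fun h => h.comp_equiv e⟩
  simpa [Function.comp_assoc] using h.comp_equiv e.symm

lemma maj_tensor_iff {n k : ℕ} (x y : Fin n → ℝ) (c : Fin k → ℝ) :
    Maj (tensor x c) (tensor y c) ↔
      MajOn (fun p : Fin n × Fin k => x p.1 * c p.2) (fun p => y p.1 * c p.2) := by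
  rw [maj_iff_majOn]
  exact majOn_comp_equiv (fun p : Fin n × Fin k => x p.1 * c p.2) (fun p => y p.1 * c p.2)
    finProdFinEquiv.symm

lemma maj_tpow_iff {n k : ℕ} (x y : Fin n → ℝ) :
    Maj (tpow x k) (tpow y k) ↔
      MajOn (fun f : Fin k → Fin n => ∏ j, x (f j)) (fun f => ∏ j, y (f j)) := by
  rw [maj_iff_majOn]
  exact majOn_comp_equiv (fun f : Fin k → Fin n => ∏ j, x (f j)) (fun f => ∏ j, y (f j))
    finFunctionFinEquiv.symm

lemma exists_top_finset (v : ι → ℝ) {m : ℕ} (hm : m ≤ Fintype.card ι) :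
    ∃ t : Finset ι, t.card = m ∧ ∀ i ∈ t, ∀ j ∉ t, v j ≤ v i := by
  classical
  induction m with
  | zero => exact ⟨∅, by simp⟩
  | succ m ih =>
    obtain ⟨t, ht, htop⟩ := ih (by omega)
    have hne : (tᶜ).Nonempty := by
      rw [← Finset.card_pos, Finset.card_compl]; omega
    obtain ⟨a, ha, hmax⟩ := Finset.exists_max_image tᶜ v hne
    rw [Finset.mem_compl] at ha
    refine ⟨insert a t, by rw [Finset.card_insert_of_notMem ha, ht], fun i hi j hj => ?_⟩
    rw [Finset.mem_insert, not_or] at hj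
    rcases Finset.mem_insert.1 hi with rfl | hi
    · exact hmax j (by simpa using hj.2)
    · exact htop i hi j hj.2

/-- A value separating a top set from its complement. -/
lemma exists_threshold {v : ι → ℝ} {t : Finset ι}
    (htop : ∀ i ∈ t, ∀ j ∉ t, v j ≤ v i) :
    ∃ τ, (∀ i ∈ t, τ ≤ v i) ∧ ∀ j ∉ t, v j ≤ τ := by
  classical
  rcases t.eq_empty_or_nonempty with rfl | hne
  · obtain ⟨τ, hτ⟩ := (Set.finite_range v).bddAbove
    exact ⟨τ, by simp, fun j _ => hτ ⟨j, rfl⟩⟩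
  · obtain ⟨i, hi, hmin⟩ := Finset.exists_min_image t v hne
    exact ⟨v i, hmin, fun j hj => htop i hi j hj⟩

lemma sum_sub_le_sum_max (v : ι → ℝ) (s : Finset ι) (τ : ℝ) :
    ∑ i ∈ s, (v i - τ) ≤ ∑ i, max (v i - τ) 0 :=
  (Finset.sum_le_sum fun _ _ => le_max_left _ _).trans
    (Finset.sum_le_univ_sum_of_nonneg fun _ => le_max_right _ _)

lemma sum_sub_eq_sum_max {v : ι → ℝ} {t : Finset ι} {τ : ℝ}
    (h1 : ∀ i ∈ t, τ ≤ v i) (h2 : ∀ j ∉ t, v j ≤ τ) :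
    ∑ i ∈ t, (v i - τ) = ∑ i, max (v i - τ) 0 := by
  rw [← Finset.sum_subset (Finset.subset_univ t)
    (fun j _ hj => max_eq_right (sub_nonpos.2 (h2 j hj)))]
  exact Finset.sum_congr rfl fun i hi => (max_eq_left (sub_nonneg.2 (h1 i hi))).symm

lemma sum_eq_sum_sub {α : Type*} (v : α → ℝ) (s : Finset α) (τ : ℝ) :
    ∑ i ∈ s, v i = ∑ i ∈ s, (v i - τ) + s.card * τ := by
  simp [Finset.sum_sub_distrib]

lemma majOn_iff_sum_max (x y : ι → ℝ) :
    MajOn x y ↔ ∑ i, x i = ∑ i, y i ∧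
      ∀ τ : ℝ, ∑ i, max (x i - τ) 0 ≤ ∑ i, max (y i - τ) 0 := by
  classical
  refine and_congr_right fun _ => ⟨fun h τ => ?_, fun h s => ?_⟩
  · obtain ⟨t, ht, hle⟩ := h (univ.filter fun i => τ ≤ x i)
    rw [← sum_sub_eq_sum_max (v := x) (t := univ.filter fun i => τ ≤ x i) (τ := τ)
      (by simp) (by simpa using fun j hj => le_of_lt hj)]
    refine le_trans ?_ (sum_sub_le_sum_max y t τ)
    rw [sum_eq_sum_sub x _ τ, sum_eq_sum_sub y t τ, ht] at hle
    linarith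
  · obtain ⟨t, ht, htop⟩ := exists_top_finset y s.card_le_univ
    obtain ⟨τ, h1, h2⟩ := exists_threshold htop
    refine ⟨t, ht, ?_⟩
    rw [sum_eq_sum_sub x s τ, sum_eq_sum_sub y t τ, ht, sum_sub_eq_sum_max h1 h2]
    linarith [sum_sub_le_sum_max x s τ, h τ]

lemma MajOn.sum_le {x y : ι → ℝ} (h : MajOn x y) {s t : Finset ι} (hst : s.card = t.card)
    (htop : ∀ i ∈ t, ∀ j ∉ t, y j ≤ y i) : ∑ i ∈ s, x i ≤ ∑ i ∈ t, y i := by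
  obtain ⟨τ, h1, h2⟩ := exists_threshold htop
  rw [sum_eq_sum_sub x s τ, sum_eq_sum_sub y t τ, sum_sub_eq_sum_max h1 h2, hst]
  linarith [sum_sub_le_sum_max x s τ, ((majOn_iff_sum_max x y).1 h).2 τ]

lemma MajOn.le_sum {x y : ι → ℝ} (h : MajOn x y) {r : Finset ι}
    (hbot : ∀ i ∈ r, ∀ j ∉ r, y i ≤ y j) : ∑ i ∈ r, y i ≤ ∑ i ∈ r, x i := by
  classical
  have h1 := h.sum_le (t := rᶜ) rfl fun i hi j hj =>
    hbot j (by simpa using hj) i (by simpa using hi)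
  have h2 := Finset.sum_add_sum_compl r x
  have h3 := Finset.sum_add_sum_compl r y
  linarith [h.1]

lemma MajOn.trans {x y z : ι → ℝ} (h : MajOn x y) (h' : MajOn y z) : MajOn x z := by
  rw [majOn_iff_sum_max] at *
  exact ⟨h.1.trans h'.1, fun τ => (h.2 τ).trans (h'.2 τ)⟩

lemma MajOn.mul_right {x y : ι → ℝ} (h : MajOn x y) {c : κ → ℝ} (hc : ∀ j, 0 ≤ c j) :
    MajOn (fun p : ι × κ => x p.1 * c p.2) (fun p => y p.1 * c p.2) := by
  rw [majOn_iff_sum_max] at *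
  refine ⟨by simp only [Fintype.sum_prod_type_right, ← Finset.sum_mul, h.1], fun τ => ?_⟩
  simp only [Fintype.sum_prod_type_right]
  refine Finset.sum_le_sum fun j _ => ?_
  rcases (hc j).eq_or_lt with h0 | h0
  · simp [← h0]
  · have key : ∀ a : ℝ, max (a * c j - τ) 0 = max (a - τ / c j) 0 * c j := by
      intro a
      rw [max_mul_of_nonneg _ _ h0.le, zero_mul, sub_mul, div_mul_cancel₀ _ h0.ne']
    simp only [key, ← Finset.sum_mul]
    exact mul_le_mul_of_nonneg_right (h.2 _) h0.le

lemma MajOn.pow {x y : ι → ℝ} (h : MajOn x y) (hx : ∀ i, 0 ≤ x i) (hy : ∀ i, 0 ≤ y i) (k : ℕ) :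
    MajOn (fun f : Fin k → ι => ∏ j, x (f j)) (fun f => ∏ j, y (f j)) := by
  induction k with
  | zero => simpa [MajOn] using fun s => ⟨s, rfl, le_rfl⟩
  | succ k ih =>
    have h1 := h.mul_right (c := fun f : Fin k → ι => ∏ j, x (f j))
      fun f => Finset.prod_nonneg fun j _ => hx _
    have h2 := (ih.mul_right hy).comp_equiv (Equiv.prodComm ι (Fin k → ι))
    have h3 : MajOn (fun p : ι × (Fin k → ι) => x p.1 * ∏ j, x (p.2 j))
        (fun p : ι × (Fin k → ι) => y p.1 * ∏ j, y (p.2 j)) := by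
      refine h1.trans ?_
      simpa [Function.comp_def, mul_comm] using h2
    have h4 := h3.comp_equiv (Fin.consEquiv (fun _ : Fin (k + 1) => ι)).symm
    simpa [Function.comp_def, Fin.prod_univ_succ, Fin.consEquiv, Fin.tail] using h4

/-- A family that averages `v` over the fibres of `π` is strictly majorized by `v` as soon as the
ranges of `v` on the fibres overlap. -/
lemma exists_sum_lt_of_average [DecidableEq β] {u v : ι → ℝ} (π : ι → β)
    (hconst : ∀ i j, π i = π j → u i = u j)
    (hsum : ∀ b, ∑ i with π i = b, u i = ∑ i with π i = b, v i)
    (hcov : ∀ τ, (∃ i j, π i = π j ∧ v i < τ ∧ τ < v j) ∨ (∀ i, τ ≤ v i) ∨ ∀ i, v i ≤ τ)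
    (hmin : ∀ i, ∃ j, v j < u i) (hmax : ∀ i, ∃ j, u i < v j)
    (s : Finset ι) (hs : s.Nonempty) (hs' : s ≠ univ) :
    ∃ t : Finset ι, t.card = s.card ∧ ∑ i ∈ s, u i < ∑ i ∈ t, v i := by
  classical
  obtain ⟨t, ht, htop⟩ := exists_top_finset v s.card_le_univ
  obtain ⟨τ, h1, h2⟩ := exists_threshold htop
  refine ⟨t, ht, ?_⟩
  rw [sum_eq_sum_sub u s τ, sum_eq_sum_sub v t τ, ht, sum_sub_eq_sum_max h1 h2]
  gcongr
  have hsub : ∀ b, ∑ i with π i = b, (u i - τ) = ∑ i with π i = b, (v i - τ) := fun b => by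
    rw [Finset.sum_sub_distrib, Finset.sum_sub_distrib, hsum b]
  have htot : ∑ i, (u i - τ) = ∑ i, (v i - τ) := by
    rw [← Finset.sum_fiberwise univ π, ← Finset.sum_fiberwise univ π (fun i => v i - τ)]
    exact Finset.sum_congr rfl fun b _ => hsub b
  rcases hcov τ with ⟨i, j, hij, hi, hj⟩ | hall | hall
  · refine (sum_sub_le_sum_max u s τ).trans_lt ?_
    rw [← Finset.sum_fiberwise univ π, ← Finset.sum_fiberwise univ π (fun i => max (v i - τ) 0)]
    have hle : ∀ b, ∑ i with π i = b, max (u i - τ) 0 =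
        max (∑ i with π i = b, (v i - τ)) 0 := by
      intro b
      rw [← hsub b]
      by_cases hpos : ∃ i, π i = b ∧ τ ≤ u i
      · obtain ⟨i, hb, hi⟩ := hpos
        have hall : ∀ j ∈ univ.filter (fun i => π i = b), 0 ≤ u j - τ := by
          intro j hj
          rw [hconst j i (by rw [hb]; simpa using hj)]; linarith
        rw [max_eq_left (Finset.sum_nonneg hall)]
        exact Finset.sum_congr rfl fun j hj => max_eq_left (hall j hj)
      · push Not at hpos
        have hall : ∀ j ∈ univ.filter (fun i => π i = b), u j - τ ≤ 0 := by
          intro j hj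
          linarith [hpos j (by simpa using hj)]
        rw [max_eq_right (Finset.sum_nonpos hall)]
        exact Finset.sum_eq_zero fun j hj => max_eq_right (hall j hj)
    refine Finset.sum_lt_sum (fun b _ => ?_) ⟨π i, Finset.mem_univ _, ?_⟩
    · rw [hle]
      exact max_le (Finset.sum_le_sum fun _ _ => le_max_left _ _)
        (Finset.sum_nonneg fun _ _ => le_max_right _ _)
    · rw [hle]
      refine max_lt (Finset.sum_lt_sum (fun _ _ => le_max_left _ _) ⟨i, by simp, ?_⟩)
        (Finset.sum_pos' (fun _ _ => le_max_right _ _) ⟨j, by simp [hij], ?_⟩)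
      · exact lt_of_lt_of_le (by linarith) (le_max_right _ _)
      · exact lt_of_lt_of_le (by linarith) (le_max_left _ _)
  · have hu : ∀ i, 0 < u i - τ := fun i => by
      obtain ⟨j, hj⟩ := hmin i
      linarith [hall j]
    obtain ⟨a, ha⟩ : ∃ a, a ∉ s := by
      by_contra! hcon
      exact hs' (Finset.eq_univ_iff_forall.2 hcon)
    calc ∑ i ∈ s, (u i - τ) < ∑ i, (u i - τ) :=
          Finset.sum_lt_sum_of_subset (Finset.subset_univ s) (Finset.mem_univ a) ha (hu a)
            fun j _ _ => (hu j).le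
      _ = ∑ i, (v i - τ) := htot
      _ ≤ _ := sum_sub_le_sum_max v univ τ
  · refine lt_of_lt_of_le ?_ (Finset.sum_nonneg fun i _ => le_max_right (v i - τ) 0)
    refine Finset.sum_neg (fun i _ => ?_) hs
    obtain ⟨j, hj⟩ := hmax i
    linarith [hall j]

lemma eventually_majOn {u : ℝ → ι → ℝ} {v : ι → ℝ} (hu : ∀ i, Continuous fun ε => u ε i)
    (hsum : ∀ ε, ∑ i, u ε i = ∑ i, v i)
    (hlt : ∀ s : Finset ι, s.Nonempty → s ≠ univ →
      ∃ t : Finset ι, t.card = s.card ∧ ∑ i ∈ s, u 0 i < ∑ i ∈ t, v i) :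
    ∀ᶠ ε in 𝓝 0, MajOn (u ε) v := by
  have key : ∀ᶠ ε in 𝓝 (0 : ℝ), ∀ s : Finset ι, ∃ t : Finset ι, t.card = s.card ∧
      ∑ i ∈ s, u ε i ≤ ∑ i ∈ t, v i := by
    rw [eventually_all]
    intro s
    rcases s.eq_empty_or_nonempty with rfl | hs
    · exact Eventually.of_forall fun ε => ⟨∅, by simp⟩
    · by_cases hs' : s = univ
      · subst hs'
        exact Eventually.of_forall fun ε => ⟨univ, rfl, (hsum ε).le⟩
      · obtain ⟨t, ht, hlt⟩ := hlt s hs hs'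
        have hc : Continuous fun ε => ∑ i ∈ s, u ε i := continuous_finsetSum _ fun i _ => hu i
        filter_upwards [hc.continuousAt.eventually_lt continuousAt_const hlt] with ε hε
        exact ⟨t, ht, hε.le⟩
  filter_upwards [key] with ε hε using ⟨hsum ε, hε⟩

end Majorization

section Inclusions

variable {n k : ℕ}

lemma sset_subset_tk (hk : 0 < k) (y : Fin n → ℝ) : Sset y ⊆ Tk k y := by
  rintro x ⟨hx, hxy⟩
  have hk' : (0 : ℝ) < k := by exact_mod_cast hk
  refine ⟨hx, fun _ => 1 / k, fun _ => by positivity, ?_, fun _ _ _ => le_rfl, ?_⟩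
  · simp [hk'.ne']
  · rw [maj_tensor_iff]
    exact ((maj_iff_majOn x y).1 hxy).mul_right (c := fun _ : Fin k => 1 / (k : ℝ))
      fun _ => by positivity

lemma sset_subset_mk {y : Fin n → ℝ} (hy : ∀ i, 0 ≤ y i) : Sset y ⊆ Mk k y := by
  rintro x ⟨hx, hxy⟩
  refine ⟨hx, ?_⟩
  rw [maj_tpow_iff]
  exact ((maj_iff_majOn x y).1 hxy).pow hx.1 hy k

/-- The first `d` indices. -/
def head (n d : ℕ) : Finset (Fin n) := univ.filter fun i => (i : ℕ) < d

/-- The indices after the first `d`. -/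
def tail (n d : ℕ) : Finset (Fin n) := univ.filter fun i => d ≤ (i : ℕ)

lemma mem_head {d : ℕ} {i : Fin n} : i ∈ head n d ↔ (i : ℕ) < d := by simp [head]

lemma mem_tail {d : ℕ} {i : Fin n} : i ∈ tail n d ↔ d ≤ (i : ℕ) := by simp [tail]

lemma card_head {d : ℕ} (hd : d ≤ n) : (head n d).card = d := by
  rw [head, Fin.card_filter_val_lt, min_eq_right hd]

lemma sum_head_add_sum_tail (x : Fin n → ℝ) (d : ℕ) :
    ∑ i ∈ head n d, x i + ∑ i ∈ tail n d, x i = ∑ i, x i := by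
  simpa [head, tail, not_lt] using
    Finset.sum_filter_add_sum_filter_not univ (fun i : Fin n => (i : ℕ) < d) x

lemma card_tail {d : ℕ} (hd : d ≤ n) : ((tail n d).card : ℝ) = n - d := by
  have := sum_head_add_sum_tail (fun _ : Fin n => (1 : ℝ)) d
  simp only [Finset.sum_const, nsmul_eq_mul, mul_one, card_head hd, Finset.card_univ,
    Fintype.card_fin] at this
  linarith

lemma head_top {y : Fin n → ℝ} (hy : Antitone y) (d : ℕ) :
    ∀ i ∈ head n d, ∀ j ∉ head n d, y j ≤ y i := by
  intro i hi j hj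
  rw [mem_head] at hi hj
  exact hy (Fin.le_def.2 (by omega))

lemma majOn_of_head {x y : Fin n → ℝ} (hx : Antitone x) (hsum : ∑ i, x i = ∑ i, y i)
    (h : ∀ d, 0 < d → d < n → ∑ i ∈ head n d, x i ≤ ∑ i ∈ head n d, y i) : MajOn x y := by
  refine ⟨hsum, fun s => ?_⟩
  have hs : s.card ≤ n := by simpa using s.card_le_univ
  refine ⟨head n s.card, card_head hs, ?_⟩
  have h1 : ∑ i ∈ s, x i ≤ ∑ i ∈ head n s.card, x i :=
    MajOn.sum_le (y := x) ⟨rfl, fun s => ⟨s, rfl, le_rfl⟩⟩ (card_head hs).symm (head_top hx _)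
  refine h1.trans ?_
  rcases Nat.eq_zero_or_pos s.card with h0 | h0
  · simp [h0, head]
  · rcases hs.eq_or_lt with h2 | h2
    · have : head n s.card = univ := by
        ext i; simp [mem_head, h2]
      rw [this, hsum]
    · exact h _ h0 h2

/-- In a positive sequence of length `k` there is a position that is not far below the start and
is followed by a large drop. -/
lemma exists_cut (hk : 0 < k) {c : ℕ → ℝ} (hc : ∀ j, 0 < c j) {A B C : ℝ} (hB : 0 < B)
    (hAB : B ≤ A) (h : A ^ (k - 1) * C ≤ B ^ k) :
    ∃ q < k, C * c 0 ≤ B * c q ∧ (q + 1 < k → A * c (q + 1) ≤ B * c q) := by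
  by_contra! hcon
  have hA : 0 < A := hB.trans_le hAB
  have hind : ∀ q < k, B ^ q * c 0 ≤ A ^ q * c q := by
    intro q
    induction q with
    | zero => simp
    | succ q ih =>
      intro hq
      have h1 := ih (by omega)
      have h2 : C * c 0 ≤ B * c q := by
        have h3 : A ^ (k - 1) * (C * c 0) ≤ A ^ (k - 1) * (B * c q) := by
          calc A ^ (k - 1) * (C * c 0) ≤ B ^ k * c 0 := by
                rw [← mul_assoc]; exact mul_le_mul_of_nonneg_right h (hc 0).le
            _ = B ^ (k - 1 - q) * (B * (B ^ q * c 0)) := by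
                rw [show k = (k - 1 - q) + 1 + q by omega, pow_add, pow_add]
                simp only [show k - 1 - q + 1 + q - 1 - q = k - 1 - q by omega]
                ring
            _ ≤ A ^ (k - 1 - q) * (B * (A ^ q * c q)) := by
                have := hc 0
                gcongr
            _ = A ^ (k - 1) * (B * c q) := by
                rw [show k - 1 = (k - 1 - q) + q by omega, pow_add]
                simp only [show k - 1 - q + q - q = k - 1 - q by omega]
                ring
        exact le_of_mul_le_mul_left h3 (by positivity)
      obtain ⟨-, h4⟩ := hcon q (by omega) h2
      calc B ^ (q + 1) * c 0 = B * (B ^ q * c 0) := by ring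
        _ ≤ B * (A ^ q * c q) := by gcongr
        _ = A ^ q * (B * c q) := by ring
        _ ≤ A ^ q * (A * c (q + 1)) := by gcongr
        _ = A ^ (q + 1) * c (q + 1) := by ring
  have hlast := hind (k - 1) (by omega)
  have h2 : C * c 0 ≤ B * c (k - 1) := by
    have h3 : A ^ (k - 1) * (C * c 0) ≤ A ^ (k - 1) * (B * c (k - 1)) := by
      calc A ^ (k - 1) * (C * c 0) ≤ B ^ k * c 0 := by
            rw [← mul_assoc]; exact mul_le_mul_of_nonneg_right h (hc 0).le
        _ = B * (B ^ (k - 1) * c 0) := by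
            rw [← mul_assoc, ← pow_succ', Nat.sub_add_cancel hk]
        _ ≤ B * (A ^ (k - 1) * c (k - 1)) := by gcongr
        _ = A ^ (k - 1) * (B * c (k - 1)) := by ring
    exact le_of_mul_le_mul_left h3 (by positivity)
  have := (hcon (k - 1) (by omega) h2).1
  omega

variable {x y : Fin n → ℝ} {d : ℕ}

lemma sum_head_le_of_tensor_left (hk : 0 < k) (hy : Antitone y) (hypos : ∀ i, 0 < y i)
    {c : Fin k → ℝ} (hc : ∀ j, 0 < c j) (hca : Antitone c) (hd0 : 0 < d) (hd : d < n)
    (h : MajOn (fun p : Fin n × Fin k => x p.1 * c p.2) (fun p => y p.1 * c p.2))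
    (hcond : y ⟨0, by omega⟩ ^ (k - 1) * y ⟨d, hd⟩ ≤ y ⟨d - 1, by omega⟩ ^ k) :
    ∑ i ∈ head n d, x i ≤ ∑ i ∈ head n d, y i := by
  obtain ⟨q, hq, h1, h2⟩ := exists_cut hk (c := fun m => if hm : m < k then c ⟨m, hm⟩ else 1)
    (fun j => by split_ifs <;> simp [hc]) (hypos _) (hy (Fin.le_def.2 (by simp))) hcond
  simp only [hk, hq, dif_pos] at h1 h2
  have hs := h.sum_le (t := head n d ×ˢ head k (q + 1)) rfl (by
    rintro ⟨i, j⟩ hi ⟨i', j'⟩ hi'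
    simp only [Finset.mem_product, mem_head, not_and_or, not_lt] at hi hi'
    have hlow : y ⟨d - 1, by omega⟩ * c ⟨q, hq⟩ ≤ y i * c j :=
      mul_le_mul (hy (Fin.le_def.2 (by simp; omega))) (hca (Fin.le_def.2 (by simp; omega)))
        (hc _).le (hypos _).le
    refine le_trans ?_ hlow
    rcases hi' with hi' | hj'
    · exact (mul_le_mul (hy (Fin.le_def.2 (by simpa using hi')))
        (hca (Fin.le_def.2 (by simp))) (hc _).le (hypos _).le).trans h1
    · have hq1 : q + 1 < k := hj'.trans_lt j'.2
      have h3 := h2 hq1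
      rw [dif_pos hq1] at h3
      exact (mul_le_mul (hy (Fin.le_def.2 (by simp)))
        (hca (Fin.le_def.2 (by simpa using hj'))) (hc _).le (hypos _).le).trans h3)
  simp only [Finset.sum_product, ← Finset.mul_sum, ← Finset.sum_mul] at hs
  exact le_of_mul_le_mul_right hs
    (Finset.sum_pos (fun j _ => hc j) ⟨⟨0, hk⟩, mem_head.2 (by simp)⟩)

lemma sum_tail_le_of_tensor_right (hk : 0 < k) (hy : Antitone y) (hypos : ∀ i, 0 < y i)
    {c : Fin k → ℝ} (hc : ∀ j, 0 < c j) (hca : Antitone c) (hd0 : 0 < d) (hd : d < n)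
    (h : MajOn (fun p : Fin n × Fin k => x p.1 * c p.2) (fun p => y p.1 * c p.2))
    (hcond : y ⟨d, hd⟩ ^ k ≤ y ⟨n - 1, by omega⟩ ^ (k - 1) * y ⟨d - 1, by omega⟩) :
    ∑ i ∈ tail n d, y i ≤ ∑ i ∈ tail n d, x i := by
  obtain ⟨q, hq, h1, h2⟩ := exists_cut hk
    (c := fun m => if hm : m < k then (c ⟨k - 1 - m, by omega⟩)⁻¹ else 1)
    (A := (y ⟨n - 1, by omega⟩)⁻¹) (B := (y ⟨d, hd⟩)⁻¹) (C := (y ⟨d - 1, by omega⟩)⁻¹)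
    (fun j => by split_ifs <;> simp [hc]) (by simp [hypos])
    (inv_anti₀ (hypos _) (hy (Fin.le_def.2 (by simp; omega)))) (by
      rw [inv_pow, inv_pow, ← mul_inv]
      exact inv_anti₀ (pow_pos (hypos _) _) hcond)
  simp only [hk, hq, dif_pos, ← mul_inv] at h1 h2
  have hs := h.le_sum (r := tail n d ×ˢ tail k (k - 1 - q)) (by
    rintro ⟨i, j⟩ hi ⟨i', j'⟩ hi'
    simp only [Finset.mem_product, mem_tail, not_and_or, not_le] at hi hi'
    have hhigh : y i * c j ≤ y ⟨d, hd⟩ * c ⟨k - 1 - q, by omega⟩ :=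
      mul_le_mul (hy (Fin.le_def.2 (by simpa using hi.1)))
        (hca (Fin.le_def.2 (by simpa using hi.2))) (hc _).le (hypos _).le
    refine hhigh.trans ?_
    rcases hi' with hi' | hj'
    · have h3 := (inv_le_inv₀ (mul_pos (hypos _) (hc _)) (mul_pos (hypos _) (hc _))).1 h1
      exact h3.trans (mul_le_mul (hy (Fin.le_def.2 (by simp; omega)))
        (hca (Fin.le_def.2 (by simp; omega))) (hc _).le (hypos _).le)
    · have hq1 : q + 1 < k := by omega
      have h3 := h2 hq1
      rw [dif_pos hq1, ← mul_inv,
        inv_le_inv₀ (mul_pos (hypos _) (hc _)) (mul_pos (hypos _) (hc _))] at h3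
      exact h3.trans (mul_le_mul (hy (Fin.le_def.2 (by simp; omega)))
        (hca (Fin.le_def.2 (by simp; omega))) (hc _).le (hypos _).le))
  simp only [Finset.sum_product, ← Finset.mul_sum, ← Finset.sum_mul] at hs
  exact le_of_mul_le_mul_right hs
    (Finset.sum_pos (fun j _ => hc j) ⟨⟨k - 1, by omega⟩, mem_tail.2 (by simp)⟩)

lemma sum_pi_prod (z : Fin n → ℝ) (s : Finset (Fin n)) :
    ∑ f ∈ Fintype.piFinset (fun _ : Fin k => s), ∏ j, z (f j) = (∑ i ∈ s, z i) ^ k := by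
  rw [← Finset.prod_univ_sum (fun _ : Fin k => s) (fun _ i => z i)]
  simp

lemma prod_le_of_exists {z : Fin k → ℝ} (hz : ∀ j, 0 ≤ z j) {A C : ℝ}
    (hA : ∀ j, z j ≤ A) (hC : ∃ j, z j ≤ C) : ∏ j, z j ≤ A ^ (k - 1) * C := by
  obtain ⟨j, hj⟩ := hC
  rw [← Finset.mul_prod_erase univ z (Finset.mem_univ j), mul_comm]
  have h0 : 0 ≤ A := (hz j).trans (hA j)
  refine mul_le_mul ?_ hj (hz j) (pow_nonneg h0 _)
  calc ∏ i ∈ univ.erase j, z i ≤ ∏ _i ∈ univ.erase j, A :=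
        Finset.prod_le_prod (fun i _ => hz i) fun i _ => hA i
    _ = A ^ (k - 1) := by simp

lemma le_prod_of_exists {z : Fin k → ℝ} {A C : ℝ} (h0 : 0 ≤ A) (hC0 : 0 ≤ C)
    (hA : ∀ j, A ≤ z j) (hC : ∃ j, C ≤ z j) : A ^ (k - 1) * C ≤ ∏ j, z j := by
  obtain ⟨j, hj⟩ := hC
  rw [← Finset.mul_prod_erase univ z (Finset.mem_univ j), mul_comm]
  refine mul_le_mul hj ?_ (pow_nonneg h0 _) (hC0.trans hj)
  calc A ^ (k - 1) = ∏ _i ∈ univ.erase j, A := by simp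
    _ ≤ _ := Finset.prod_le_prod (fun _ _ => h0) fun i _ => hA i

lemma sum_head_le_of_pow_left (hk : 0 < k) (hx : ∀ i, 0 ≤ x i) (hy : Antitone y)
    (hypos : ∀ i, 0 < y i) (hd : d < n)
    (h : MajOn (fun f : Fin k → Fin n => ∏ j, x (f j)) (fun f => ∏ j, y (f j)))
    (hcond : y ⟨0, by omega⟩ ^ (k - 1) * y ⟨d, hd⟩ ≤ y ⟨d - 1, by omega⟩ ^ k) :
    ∑ i ∈ head n d, x i ≤ ∑ i ∈ head n d, y i := by
  have hs := h.sum_le (t := Fintype.piFinset fun _ => head n d) rfl (by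
    intro f hf g hg
    simp only [Fintype.mem_piFinset, mem_head, not_forall, not_lt] at hf hg
    obtain ⟨j, hj⟩ := hg
    calc ∏ j, y (g j) ≤ _ := prod_le_of_exists (fun j => (hypos _).le)
          (fun j => hy (Fin.le_def.2 (by simp))) ⟨j, hy (Fin.le_def.2 (by simpa using hj))⟩
      _ ≤ _ := hcond
      _ = ∏ _j : Fin k, y ⟨d - 1, by omega⟩ := by simp
      _ ≤ ∏ j, y (f j) := Finset.prod_le_prod (fun _ _ => (hypos _).le)
          fun j _ => hy (Fin.le_def.2 (by have := hf j; simp; omega)))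
  rw [sum_pi_prod, sum_pi_prod] at hs
  exact (pow_le_pow_iff_left₀ (Finset.sum_nonneg fun i _ => hx i)
    (Finset.sum_nonneg fun i _ => (hypos i).le) hk.ne').1 hs

lemma sum_tail_le_of_pow_right (hk : 0 < k) (hx : ∀ i, 0 ≤ x i) (hy : Antitone y)
    (hypos : ∀ i, 0 < y i) (hd : d < n)
    (h : MajOn (fun f : Fin k → Fin n => ∏ j, x (f j)) (fun f => ∏ j, y (f j)))
    (hcond : y ⟨d, hd⟩ ^ k ≤ y ⟨n - 1, by omega⟩ ^ (k - 1) * y ⟨d - 1, by omega⟩) :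
    ∑ i ∈ tail n d, y i ≤ ∑ i ∈ tail n d, x i := by
  have hs := h.le_sum (r := Fintype.piFinset fun _ => tail n d) (by
    intro f hf g hg
    simp only [Fintype.mem_piFinset, mem_tail, not_forall, not_le] at hf hg
    obtain ⟨j, hj⟩ := hg
    calc ∏ j, y (f j) ≤ ∏ _j : Fin k, y ⟨d, hd⟩ :=
          Finset.prod_le_prod (fun _ _ => (hypos _).le)
            fun j _ => hy (Fin.le_def.2 (by simpa using hf j))
      _ = y ⟨d, hd⟩ ^ k := by simp
      _ ≤ _ := hcond
      _ ≤ ∏ j, y (g j) := le_prod_of_exists (hypos _).le (hypos _).le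
          (fun j => hy (Fin.le_def.2 (by simp; omega)))
          ⟨j, hy (Fin.le_def.2 (by simp; omega))⟩)
  rw [sum_pi_prod, sum_pi_prod] at hs
  exact (pow_le_pow_iff_left₀ (Finset.sum_nonneg fun i _ => (hypos i).le)
    (Finset.sum_nonneg fun i _ => hx i) hk.ne').1 hs

/-- The spectral condition at the cut `d` under which catalysis does not help across `d`. -/
def CutCond (k : ℕ) (y : Fin n → ℝ) (d : ℕ) (hd : d < n) : Prop :=
  y ⟨d - 1, by omega⟩ ^ k ≥ y ⟨0, by omega⟩ ^ (k - 1) * y ⟨d, hd⟩ ∨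
    y ⟨d, hd⟩ ^ k ≤ y ⟨n - 1, by omega⟩ ^ (k - 1) * y ⟨d - 1, by omega⟩

lemma cutCond_of_forall (hk : 0 < k) (hy : Antitone y) (hypos : ∀ i, 0 < y i)
    (h : ∀ (d : ℕ) (_ : 1 < d) (hd2 : d + 1 < n), CutCond k y d (Nat.lt_of_succ_lt hd2))
    (hd0 : 0 < d) (hd : d < n) : CutCond k y d hd := by
  have hpow : ∀ a : ℝ, a ^ k = a ^ (k - 1) * a := fun a => by
    rw [← pow_succ, Nat.sub_add_cancel hk]
  by_cases h1 : d = 1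
  · subst h1
    left
    rw [hpow]
    exact mul_le_mul_of_nonneg_left (hy (Fin.le_def.2 (by simp))) (pow_nonneg (hypos _).le _)
  · by_cases h2 : d + 1 = n
    · subst h2
      right
      rw [hpow]
      exact mul_le_mul_of_nonneg_left (hy (Fin.le_def.2 (by simp))) (pow_nonneg (hypos _).le _)
    · exact h d (by omega) (by omega)

lemma tk_subset_sset (hk : 0 < k) (hy : y ∈ Vn n) (hypos : ∀ i, 0 < y i)
    (h : ∀ (d : ℕ) (hd : d < n), 0 < d → CutCond k y d hd) : Tk k y ⊆ Sset y := by
  rintro x ⟨hx, c, hc, -, hca, hmaj⟩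
  rw [maj_tensor_iff] at hmaj
  have hsum : ∑ i, x i = ∑ i, y i := hx.2.1.trans hy.2.1.symm
  refine ⟨hx, (maj_iff_majOn x y).2 (majOn_of_head hx.2.2 hsum fun d hd0 hd => ?_)⟩
  rcases h d hd hd0 with h1 | h1
  · exact sum_head_le_of_tensor_left hk hy.2.2 hypos hc hca hd0 hd hmaj h1
  · have := sum_tail_le_of_tensor_right hk hy.2.2 hypos hc hca hd0 hd hmaj h1
    linarith [sum_head_add_sum_tail x d, sum_head_add_sum_tail y d]

lemma mk_subset_sset (hk : 0 < k) (hy : y ∈ Vn n) (hypos : ∀ i, 0 < y i)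
    (h : ∀ (d : ℕ) (hd : d < n), 0 < d → CutCond k y d hd) : Mk k y ⊆ Sset y := by
  rintro x ⟨hx, hmaj⟩
  rw [maj_tpow_iff] at hmaj
  have hsum : ∑ i, x i = ∑ i, y i := hx.2.1.trans hy.2.1.symm
  refine ⟨hx, (maj_iff_majOn x y).2 (majOn_of_head hx.2.2 hsum fun d hd0 hd => ?_)⟩
  rcases h d hd hd0 with h1 | h1
  · exact sum_head_le_of_pow_left hk hx.1 hy.2.2 hypos hd hmaj h1
  · have := sum_tail_le_of_pow_right hk hx.1 hy.2.2 hypos hd hmaj h1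
    linarith [sum_head_add_sum_tail x d, sum_head_add_sum_tail y d]

end Inclusions

section Perturbation

variable {n k d : ℕ}

lemma exists_ratio (hk : 0 < k) {A B C D : ℝ} (hA : 0 < A) (hB : 0 < B) (hC : 0 < C) (hD : 0 < D)
    (hCB : C ≤ B) (h1 : B ^ k < A ^ (k - 1) * C) (h2 : D ^ (k - 1) * B < C ^ k) :
    ∃ α : ℝ, 0 < α ∧ α < 1 ∧ B < A * α ∧ D < C * α ∧ B * α ^ (k - 1) < C := by
  have hpow : ∀ a : ℝ, a ^ k = a ^ (k - 1) * a := fun a => by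
    rw [← pow_succ, Nat.sub_add_cancel hk]
  rw [hpow] at h1 h2
  have hBA : B < A := by
    by_contra! hcon
    have : A ^ (k - 1) * C ≤ B ^ (k - 1) * B := by gcongr
    linarith
  have hDC : D < C := by
    by_contra! hcon
    have : C ^ (k - 1) * C ≤ D ^ (k - 1) * B := by gcongr
    linarith
  set a := max (B / A) (D / C) with ha
  have ha1 : a < 1 := max_lt ((div_lt_one hA).2 hBA) ((div_lt_one hC).2 hDC)
  have ha0 : 0 < a := lt_max_of_lt_left (div_pos hB hA)
  have hlt : B * a ^ (k - 1) < C := by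
    rcases max_choice (B / A) (D / C) with h | h
    · rw [ha, h, div_pow, mul_div_assoc', div_lt_iff₀ (by positivity)]
      linarith
    · rw [ha, h, div_pow, mul_div_assoc', div_lt_iff₀ (by positivity)]
      linarith
  have hcont : Continuous fun t : ℝ => B * t ^ (k - 1) := by fun_prop
  have hev : ∀ᶠ t in 𝓝[>] a, B * t ^ (k - 1) < C :=
    (hcont.continuousAt.eventually_lt continuousAt_const hlt).filter_mono nhdsWithin_le_nhds
  obtain ⟨α, hα, hαa, hα1⟩ := (hev.and (Ioo_mem_nhdsGT ha1)).exists
  refine ⟨α, ha0.trans hαa, hα1, ?_, ?_, hα⟩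
  · rw [mul_comm, ← div_lt_iff₀ hA]
    exact (le_max_left _ _).trans_lt hαa
  · rw [mul_comm, ← div_lt_iff₀ hC]
    exact (le_max_right _ _).trans_lt hαa

/-- Overlapping open intervals cover everything strictly between their extremes. -/
lemma exists_mem_Ioo_of_chain {lo hi : ℕ → ℝ} {N : ℕ} (h : ∀ p < N, lo p < hi (p + 1)) {τ : ℝ}
    (h0 : τ < hi 0) (hN : lo N < τ) : ∃ p ≤ N, lo p < τ ∧ τ < hi p := by
  induction N with
  | zero => exact ⟨0, le_rfl, hN, h0⟩
  | succ N ih =>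
    by_cases hτ : lo N < τ
    · obtain ⟨p, hp, hp'⟩ := ih (fun p hp => h p (by omega)) hτ
      exact ⟨p, by omega, hp'⟩
    · exact ⟨N + 1, le_rfl, hN, (not_lt.1 hτ).trans_lt (h N (by omega))⟩

/-- The vector with constant entries before and after the cut `d`, obtained from `y` by averaging
on both sides and moving mass `ε` to the first part. -/
def twoLevel (y : Fin n → ℝ) (d : ℕ) (ε : ℝ) : Fin n → ℝ := fun i =>
  if (i : ℕ) < d then (∑ i ∈ head n d, y i + ε) / d else (∑ i ∈ tail n d, y i - ε) / (n - d)

lemma sum_head_twoLevel (y : Fin n → ℝ) (hd0 : 0 < d) (hd : d < n) (ε : ℝ) :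
    ∑ i ∈ head n d, twoLevel y d ε i = ∑ i ∈ head n d, y i + ε := by
  have hd' : (d : ℝ) ≠ 0 := by exact_mod_cast hd0.ne'
  unfold twoLevel
  rw [Finset.sum_congr rfl fun i hi => if_pos (mem_head.1 hi),
    Finset.sum_const, card_head hd.le, nsmul_eq_mul]
  field_simp

lemma sum_tail_twoLevel (y : Fin n → ℝ) (hd : d < n) (ε : ℝ) :
    ∑ i ∈ tail n d, twoLevel y d ε i = ∑ i ∈ tail n d, y i - ε := by
  have hd' : (n : ℝ) - d ≠ 0 := sub_ne_zero.2 (by exact_mod_cast hd.ne')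
  unfold twoLevel
  rw [Finset.sum_congr rfl fun i hi => if_neg (not_lt.2 (mem_tail.1 hi)),
    Finset.sum_const, nsmul_eq_mul, card_tail hd.le]
  field_simp

lemma sum_twoLevel (y : Fin n → ℝ) (hd0 : 0 < d) (hd : d < n) (ε : ℝ) :
    ∑ i, twoLevel y d ε i = ∑ i, y i := by
  rw [← sum_head_add_sum_tail _ d, sum_head_twoLevel y hd0 hd, sum_tail_twoLevel y hd,
    ← sum_head_add_sum_tail y d]
  ring

lemma continuous_twoLevel (y : Fin n → ℝ) (d : ℕ) (i : Fin n) :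
    Continuous fun ε => twoLevel y d ε i := by
  unfold twoLevel
  split_ifs <;> fun_prop

lemma sum_side_twoLevel (y : Fin n → ℝ) (hd0 : 0 < d) (hd : d < n) (b : Bool) :
    ∑ i ∈ univ.filter (fun i : Fin n => decide ((i : ℕ) < d) = b), twoLevel y d 0 i =
      ∑ i ∈ univ.filter (fun i : Fin n => decide ((i : ℕ) < d) = b), y i := by
  cases b
  · have : (univ.filter fun i : Fin n => decide ((i : ℕ) < d) = false) = tail n d := by
      ext i; simp [mem_tail]
    rw [this, sum_tail_twoLevel y hd, sub_zero]
  · have : (univ.filter fun i : Fin n => decide ((i : ℕ) < d) = true) = head n d := by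
      ext i; simp [mem_head]
    rw [this, sum_head_twoLevel y hd0 hd, add_zero]

lemma twoLevel_congr (y : Fin n → ℝ) (d : ℕ) (ε : ℝ) {i j : Fin n}
    (h : decide ((i : ℕ) < d) = decide ((j : ℕ) < d)) : twoLevel y d ε i = twoLevel y d ε j := by
  have : (i : ℕ) < d ↔ (j : ℕ) < d := by simpa using h
  simp only [twoLevel, this]

variable {y : Fin n → ℝ}

lemma le_head_average (hy : Antitone y) (hd0 : 0 < d) (hd : d < n) :
    y ⟨d - 1, by omega⟩ ≤ (∑ i ∈ head n d, y i) / d := by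
  rw [le_div_iff₀ (by exact_mod_cast hd0), mul_comm]
  have := Finset.card_nsmul_le_sum (head n d) y (y ⟨d - 1, by omega⟩) fun i hi =>
    hy (Fin.le_def.2 (by have := mem_head.1 hi; simp; omega))
  simpa [card_head hd.le] using this

lemma tail_average_le (hy : Antitone y) (hd : d < n) :
    (∑ i ∈ tail n d, y i) / (n - d) ≤ y ⟨d, hd⟩ := by
  have hd' : (0 : ℝ) < n - d := sub_pos.2 (by exact_mod_cast hd)
  rw [div_le_iff₀ hd', mul_comm]
  have := Finset.sum_le_card_nsmul (tail n d) y (y ⟨d, hd⟩) fun i hi =>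
    hy (Fin.le_def.2 (by simpa using mem_tail.1 hi))
  simpa [card_tail hd.le] using this

lemma twoLevel_zero_lt (hy : Antitone y) (hd0 : 0 < d) (hd : d < n)
    (hlt : y ⟨d - 1, by omega⟩ < y ⟨0, by omega⟩) (i : Fin n) :
    twoLevel y d 0 i < y ⟨0, by omega⟩ := by
  unfold twoLevel
  split_ifs
  · rw [add_zero, div_lt_iff₀ (by exact_mod_cast hd0), mul_comm]
    have : ∑ i ∈ head n d, y i < ∑ _i ∈ head n d, y ⟨0, by omega⟩ :=
      Finset.sum_lt_sum (fun i _ => hy (Fin.le_def.2 (by simp)))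
        ⟨⟨d - 1, by omega⟩, mem_head.2 (by simp; omega), hlt⟩
    simpa [card_head hd.le] using this
  · rw [sub_zero]
    exact ((tail_average_le hy hd).trans (hy (Fin.le_def.2 (by simp)))).trans_lt hlt

lemma lt_twoLevel_zero (hy : Antitone y) (hd0 : 0 < d) (hd : d < n)
    (hlt : y ⟨n - 1, by omega⟩ < y ⟨d, hd⟩) (i : Fin n) :
    y ⟨n - 1, by omega⟩ < twoLevel y d 0 i := by
  unfold twoLevel
  split_ifs
  · rw [add_zero]
    exact hlt.trans_le ((hy (Fin.le_def.2 (by simp))).trans (le_head_average hy hd0 hd))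
  · have hd' : (0 : ℝ) < n - d := sub_pos.2 (by exact_mod_cast hd)
    rw [sub_zero, lt_div_iff₀ hd', mul_comm]
    have : ∑ _i ∈ tail n d, y ⟨n - 1, by omega⟩ < ∑ i ∈ tail n d, y i :=
      Finset.sum_lt_sum (fun i _ => hy (Fin.le_def.2 (by simp; omega)))
        ⟨⟨d, hd⟩, mem_tail.2 le_rfl, hlt⟩
    simpa [card_tail hd.le] using this

lemma twoLevel_mem (hy : y ∈ Vn n) (hd0 : 0 < d) (hd : d < n) {ε : ℝ} (hε : 0 ≤ ε)
    (hε' : ε ≤ ∑ i ∈ tail n d, y i) : twoLevel y d ε ∈ Vn n := by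
  have hd' : (0 : ℝ) < n - d := sub_pos.2 (by exact_mod_cast hd)
  refine ⟨fun i => ?_, (sum_twoLevel y hd0 hd ε).trans hy.2.1, fun i j hij => ?_⟩
  · unfold twoLevel
    split_ifs
    · exact div_nonneg (add_nonneg (Finset.sum_nonneg fun i _ => hy.1 i) hε) (Nat.cast_nonneg d)
    · exact div_nonneg (sub_nonneg.2 hε') hd'.le
  · have hij' : (i : ℕ) ≤ j := hij
    unfold twoLevel
    split_ifs with h1 h2 h2
    · exact le_rfl
    · omega
    · calc (∑ i ∈ tail n d, y i - ε) / (n - d) ≤ (∑ i ∈ tail n d, y i) / (n - d) := by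
            gcongr; linarith
        _ ≤ y ⟨d, hd⟩ := tail_average_le hy.2.2 hd
        _ ≤ y ⟨d - 1, by omega⟩ := hy.2.2 (Fin.le_def.2 (by simp))
        _ ≤ (∑ i ∈ head n d, y i) / d := le_head_average hy.2.2 hd0 hd
        _ ≤ _ := by gcongr; linarith
    · exact le_rfl

lemma twoLevel_notMem_sset (hy : Antitone y) (hd0 : 0 < d) (hd : d < n) {ε : ℝ} (hε : 0 < ε) :
    twoLevel y d ε ∉ Sset y := by
  rintro ⟨-, h⟩
  have := ((maj_iff_majOn _ _).1 h).sum_le (s := head n d) rfl (head_top hy d)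
  rw [sum_head_twoLevel y hd0 hd] at this
  linarith

lemma exists_twoLevel_of_eventually (hy : y ∈ Vn n) (hypos : ∀ i, 0 < y i) (hd0 : 0 < d)
    (hd : d < n) {P : (Fin n → ℝ) → Prop} (hP : ∀ᶠ ε in 𝓝 0, P (twoLevel y d ε)) :
    ∃ x ∈ Vn n, P x ∧ x ∉ Sset y := by
  have hpos : 0 < ∑ i ∈ tail n d, y i :=
    Finset.sum_pos (fun i _ => hypos i) ⟨⟨d, hd⟩, mem_tail.2 le_rfl⟩
  have hP' : ∀ᶠ ε in 𝓝[>] 0, P (twoLevel y d ε) := hP.filter_mono nhdsWithin_le_nhds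
  obtain ⟨ε, hε, h0, h1⟩ := (hP'.and (Ioo_mem_nhdsGT hpos)).exists
  exact ⟨_, twoLevel_mem hy hd0 hd h0.le h1.le, hε, twoLevel_notMem_sset hy.2.2 hd0 hd h0⟩

lemma eventually_majOn_tensor (hk : 0 < k) (hy : Antitone y) (hypos : ∀ i, 0 < y i)
    (hd0 : 0 < d) (hd : d < n)
    (hA : y ⟨d - 1, by omega⟩ < y ⟨0, by omega⟩) (hD : y ⟨n - 1, by omega⟩ < y ⟨d, hd⟩)
    {c : ℕ → ℝ} (hc : ∀ j, 0 < c j) (hca : Antitone c)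
    (h1 : ∀ p, y ⟨d - 1, by omega⟩ * c p < y ⟨0, by omega⟩ * c (p + 1))
    (h2 : ∀ p, y ⟨n - 1, by omega⟩ * c p < y ⟨d, hd⟩ * c (p + 1))
    (h3 : y ⟨d - 1, by omega⟩ * c (k - 1) < y ⟨d, hd⟩ * c 0) :
    ∀ᶠ ε in 𝓝 0, MajOn (fun p : Fin n × Fin k => twoLevel y d ε p.1 * c p.2)
      (fun p => y p.1 * c p.2) := by
  refine eventually_majOn (u := fun ε (p : Fin n × Fin k) => twoLevel y d ε p.1 * c p.2)
    (fun p => (continuous_twoLevel y d p.1).mul continuous_const) (fun ε => ?_) ?_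
  · simp only [Fintype.sum_prod_type_right, ← Finset.sum_mul, sum_twoLevel y hd0 hd]
  refine exists_sum_lt_of_average
    (fun p : Fin n × Fin k => ((decide ((p.1 : ℕ) < d), p.2) : Bool × Fin k)) ?_ ?_ ?_ ?_ ?_
  · rintro ⟨i, j⟩ ⟨i', j'⟩ h
    obtain ⟨ha, hb⟩ := Prod.mk.inj h
    dsimp only at ha hb ⊢
    rw [hb, twoLevel_congr y d 0 ha]
  · rintro ⟨b, j⟩
    have : (univ.filter fun p : Fin n × Fin k => ((decide ((p.1 : ℕ) < d), p.2) : Bool × Fin k) =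
        (b, j)) = (univ.filter fun i : Fin n => decide ((i : ℕ) < d) = b) ×ˢ {j} := by
      ext p; simp [Prod.ext_iff, eq_comm]
    rw [this]
    simp only [Finset.sum_product, Finset.sum_singleton, ← Finset.sum_mul,
      sum_side_twoLevel y hd0 hd]
  · intro τ
    by_cases hτ0 : τ < y ⟨0, by omega⟩ * c 0
    swap
    · right; right
      rintro ⟨i, j⟩
      exact (mul_le_mul (hy (Fin.le_def.2 (by simp))) (hca (by simp)) (hc _).le
        (hypos _).le).trans (not_lt.1 hτ0)
    by_cases hτ1 : y ⟨n - 1, by omega⟩ * c (k - 1) < τ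
    swap
    · right; left
      rintro ⟨i, j⟩
      exact (not_lt.1 hτ1).trans (mul_le_mul (hy (Fin.le_def.2 (by simp; omega)))
        (hca (by have := j.2; omega)) (hc _).le (hypos _).le)
    left
    by_cases hτ2 : y ⟨d - 1, by omega⟩ * c (k - 1) < τ
    · obtain ⟨p, hp, hlo, hhi⟩ := exists_mem_Ioo_of_chain
        (lo := fun p => y ⟨d - 1, by omega⟩ * c p) (hi := fun p => y ⟨0, by omega⟩ * c p)
        (fun p _ => h1 p) hτ0 hτ2
      exact ⟨(⟨d - 1, by omega⟩, ⟨p, by omega⟩), (⟨0, by omega⟩, ⟨p, by omega⟩),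
        by simp [hd0], hlo, hhi⟩
    · obtain ⟨p, hp, hlo, hhi⟩ := exists_mem_Ioo_of_chain
        (lo := fun p => y ⟨n - 1, by omega⟩ * c p) (hi := fun p => y ⟨d, hd⟩ * c p)
        (fun p _ => h2 p) ((not_lt.1 hτ2).trans_lt h3) hτ1
      exact ⟨(⟨n - 1, by omega⟩, ⟨p, by omega⟩), (⟨d, hd⟩, ⟨p, by omega⟩),
        by simp; omega, hlo, hhi⟩
  · rintro ⟨i, j⟩
    exact ⟨(⟨n - 1, by omega⟩, j),
      mul_lt_mul_of_pos_right (lt_twoLevel_zero hy hd0 hd hD i) (hc _)⟩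
  · rintro ⟨i, j⟩
    exact ⟨(⟨0, by omega⟩, j),
      mul_lt_mul_of_pos_right (twoLevel_zero_lt hy hd0 hd hA i) (hc _)⟩

lemma prod_ite_val_lt {p : ℕ} (hp : p ≤ k) (a b : Fin n) :
    ∏ j : Fin k, y (if (j : ℕ) < p then a else b) = y a ^ p * y b ^ (k - p) := by
  simp only [apply_ite y]
  rw [Finset.prod_ite, Finset.prod_const, Finset.prod_const, Finset.filter_not,
    Finset.card_sdiff_of_subset (Finset.filter_subset _ _), Fin.card_filter_val_lt,
    min_eq_right hp]
  simp

lemma eventually_majOn_pow (hk : 0 < k) (hy : Antitone y) (hypos : ∀ i, 0 < y i)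
    (hd0 : 0 < d) (hd : d < n)
    (hA : y ⟨d - 1, by omega⟩ < y ⟨0, by omega⟩) (hD : y ⟨n - 1, by omega⟩ < y ⟨d, hd⟩)
    (h1 : ∀ p < k, y ⟨n - 1, by omega⟩ ^ p * y ⟨d - 1, by omega⟩ ^ (k - p) <
      y ⟨d, hd⟩ ^ (p + 1) * y ⟨0, by omega⟩ ^ (k - (p + 1))) :
    ∀ᶠ ε in 𝓝 0, MajOn (fun f : Fin k → Fin n => ∏ j, twoLevel y d ε (f j))
      (fun f => ∏ j, y (f j)) := by
  have hne : (univ : Finset (Fin k)).Nonempty := ⟨⟨0, hk⟩, Finset.mem_univ _⟩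
  refine eventually_majOn (u := fun ε (f : Fin k → Fin n) => ∏ j, twoLevel y d ε (f j))
    (fun f => continuous_finsetProd _ fun j _ => continuous_twoLevel y d (f j)) (fun ε => ?_) ?_
  · rw [← Fintype.piFinset_univ, sum_pi_prod, sum_pi_prod, sum_twoLevel y hd0 hd]
  refine exists_sum_lt_of_average
    (fun f : Fin k → Fin n => fun j => decide ((f j : ℕ) < d)) ?_ ?_ ?_ ?_ ?_
  · intro f g h
    exact Finset.prod_congr rfl fun j _ => twoLevel_congr y d 0 (congrFun h j)
  · intro b
    have : (univ.filter fun f : Fin k → Fin n => (fun j => decide ((f j : ℕ) < d)) = b) =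
        Fintype.piFinset fun j => univ.filter fun i : Fin n => decide ((i : ℕ) < d) = b j := by
      ext f; simp [funext_iff]
    rw [this, ← Finset.prod_univ_sum (fun j => univ.filter fun i : Fin n =>
        decide ((i : ℕ) < d) = b j) (fun _ i => twoLevel y d 0 i),
      ← Finset.prod_univ_sum (fun j => univ.filter fun i : Fin n =>
        decide ((i : ℕ) < d) = b j) (fun _ i => y i)]
    simp only [sum_side_twoLevel y hd0 hd]
  · intro τ
    by_cases hτ0 : τ < y ⟨0, by omega⟩ ^ k
    swap
    · right; right
      intro f
      refine le_trans ?_ (not_lt.1 hτ0)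
      calc ∏ j, y (f j) ≤ ∏ _j : Fin k, y ⟨0, by omega⟩ :=
            Finset.prod_le_prod (fun _ _ => (hypos _).le) fun j _ => hy (Fin.le_def.2 (by simp))
        _ = _ := by simp
    by_cases hτ1 : y ⟨n - 1, by omega⟩ ^ k < τ
    swap
    · right; left
      intro f
      refine (not_lt.1 hτ1).trans ?_
      calc y ⟨n - 1, by omega⟩ ^ k = ∏ _j : Fin k, y ⟨n - 1, by omega⟩ := by simp
        _ ≤ _ := Finset.prod_le_prod (fun _ _ => (hypos _).le)
            fun j _ => hy (Fin.le_def.2 (by simp; omega))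
    left
    obtain ⟨p, hp, hlo, hhi⟩ := exists_mem_Ioo_of_chain (N := k)
      (lo := fun p => y ⟨n - 1, by omega⟩ ^ p * y ⟨d - 1, by omega⟩ ^ (k - p))
      (hi := fun p => y ⟨d, hd⟩ ^ p * y ⟨0, by omega⟩ ^ (k - p))
      h1 (by simpa using hτ0) (by simpa using hτ1)
    refine ⟨fun j => if (j : ℕ) < p then ⟨n - 1, by omega⟩ else ⟨d - 1, by omega⟩,
      fun j => if (j : ℕ) < p then ⟨d, hd⟩ else ⟨0, by omega⟩, ?_, ?_, ?_⟩
    · funext j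
      dsimp only
      split_ifs
      · simp; omega
      · simp [hd0]
    · rw [prod_ite_val_lt hp]; exact hlo
    · rw [prod_ite_val_lt hp]; exact hhi
  · intro f
    exact ⟨fun _ => ⟨n - 1, by omega⟩, Finset.prod_lt_prod_of_nonempty (fun _ _ => hypos _)
      (fun j _ => lt_twoLevel_zero hy hd0 hd hD (f j)) hne⟩
  · intro f
    exact ⟨fun _ => ⟨0, by omega⟩, Finset.prod_lt_prod_of_nonempty
      (fun j _ => (hypos _).trans (lt_twoLevel_zero hy hd0 hd hD (f j)))
      (fun j _ => twoLevel_zero_lt hy hd0 hd hA (f j)) hne⟩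

lemma exists_mem_tk_mk_of_not_cutCond (hk : 0 < k) (hy : y ∈ Vn n) (hypos : ∀ i, 0 < y i)
    (hd0 : 0 < d) (hd : d < n) (h : ¬ CutCond k y d hd) :
    (∃ x ∈ Tk k y, x ∉ Sset y) ∧ ∃ x ∈ Mk k y, x ∉ Sset y := by
  rw [CutCond, not_or, ge_iff_le, not_le, not_le] at h
  obtain ⟨α, hα0, hα1, h1, h2, h3⟩ := exists_ratio hk (hypos _) (hypos _) (hypos _) (hypos _)
    (hy.2.2 (Fin.le_def.2 (by simp))) h.1 h.2
  have hA : y ⟨d - 1, by omega⟩ < y ⟨0, by omega⟩ :=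
    h1.trans (mul_lt_of_lt_one_right (hypos _) hα1)
  have hD : y ⟨n - 1, by omega⟩ < y ⟨d, hd⟩ := h2.trans (mul_lt_of_lt_one_right (hypos _) hα1)
  constructor
  · set Z := ∑ j : Fin k, α ^ (j : ℕ) with hZ
    have hZ0 : 0 < Z := Finset.sum_pos (fun j _ => pow_pos hα0 _) ⟨⟨0, hk⟩, Finset.mem_univ _⟩
    have hc : ∀ j : ℕ, 0 < α ^ j / Z := fun j => by positivity
    have hca : Antitone fun j : ℕ => α ^ j / Z := fun i j hij =>
      div_le_div_of_nonneg_right (pow_le_pow_of_le_one hα0.le hα1.le hij) hZ0.le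
    have hstep : ∀ a b : ℝ, a < b * α → ∀ p : ℕ, a * (α ^ p / Z) < b * (α ^ (p + 1) / Z) := by
      intro a b hab p
      calc a * (α ^ p / Z) < b * α * (α ^ p / Z) := mul_lt_mul_of_pos_right hab (hc p)
        _ = b * (α ^ (p + 1) / Z) := by ring
    obtain ⟨x, hx, hmaj, hxS⟩ := exists_twoLevel_of_eventually hy hypos hd0 hd
      (P := fun x => MajOn (fun p : Fin n × Fin k => x p.1 * (α ^ (p.2 : ℕ) / Z))
        (fun p => y p.1 * (α ^ (p.2 : ℕ) / Z)))
      (eventually_majOn_tensor hk hy.2.2 hypos hd0 hd hA hD hc hca (hstep _ _ h1) (hstep _ _ h2)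
        (by
          rw [pow_zero, mul_div_assoc', mul_div_assoc', mul_one]
          exact div_lt_div_of_pos_right h3 hZ0))
    exact ⟨x, ⟨hx, fun j => α ^ (j : ℕ) / Z, fun j => hc j,
      by rw [← Finset.sum_div, ← hZ, div_self hZ0.ne'], fun i j hij => hca hij,
      (maj_tensor_iff x y _).2 hmaj⟩, hxS⟩
  · obtain ⟨x, hx, hmaj, hxS⟩ := exists_twoLevel_of_eventually hy hypos hd0 hd
      (P := fun x => MajOn (fun f : Fin k → Fin n => ∏ j, x (f j)) (fun f => ∏ j, y (f j)))
      (eventually_majOn_pow hk hy.2.2 hypos hd0 hd hA hD (fun p hp => by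
        set A := y ⟨0, by omega⟩
        set B := y ⟨d - 1, by omega⟩
        set C := y ⟨d, hd⟩
        set D := y ⟨n - 1, by omega⟩
        have hA0 : 0 < A := hypos _
        have hB0 : 0 < B := hypos _
        have hC0 : 0 < C := hypos _
        have hD0 : 0 < D := hypos _
        obtain ⟨q, rfl⟩ : ∃ q, k = p + 1 + q := ⟨k - (p + 1), by omega⟩
        rw [show p + 1 + q - p = q + 1 by omega, show p + 1 + q - (p + 1) = q by omega]
        rw [show p + 1 + q - 1 = p + q by omega] at h3
        calc D ^ p * B ^ (q + 1) = D ^ p * B ^ q * B := by ring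
          _ ≤ (C * α) ^ p * (A * α) ^ q * B := by gcongr
          _ = C ^ p * A ^ q * (B * α ^ (p + q)) := by ring
          _ < C ^ p * A ^ q * C := by gcongr
          _ = C ^ (p + 1) * A ^ q := by ring))
    exact ⟨x, ⟨hx, (maj_tpow_iff x y).2 hmaj⟩, hxS⟩

end Perturbation

/-- Theorem 2 of the paper. The equivalence of
`T_k(y) = S(y)`, `M_k(y) = S(y)`, and the condition
`y_d^k ≥ y_1^{k-1} y_{d+1}` or `y_{d+1}^k ≤ y_n^{k-1} y_d` for all `1 < d < n-1`
(1-based indices in the informal statement, 0-based here). -/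
theorem stmt1 {n k : ℕ} (hk : 0 < k)
    (y : Fin n → ℝ) (hy : y ∈ Vn n) (hypos : ∀ i, 0 < y i) :
    (Tk k y = Sset y ↔ Mk k y = Sset y) ∧
    (Tk k y = Sset y ↔ ∀ (d : ℕ) (hd1 : 1 < d) (hd2 : d + 1 < n),
      y ⟨d - 1, by omega⟩ ^ k ≥ y ⟨0, by omega⟩ ^ (k - 1) * y ⟨d, by omega⟩ ∨
      y ⟨d, by omega⟩ ^ k ≤ y ⟨n - 1, by omega⟩ ^ (k - 1) * y ⟨d - 1, by omega⟩) := by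
  have hT : (∀ (d : ℕ) (_ : 1 < d) (hd2 : d + 1 < n), CutCond k y d (Nat.lt_of_succ_lt hd2)) →
      Tk k y = Sset y ∧ Mk k y = Sset y := fun h => by
    have h' : ∀ (d : ℕ) (hd : d < n), 0 < d → CutCond k y d hd := fun d hd hd0 =>
      cutCond_of_forall hk hy.2.2 hypos h hd0 hd
    exact ⟨(tk_subset_sset hk hy hypos h').antisymm (sset_subset_tk hk y),
      (mk_subset_sset hk hy hypos h').antisymm (sset_subset_mk hy.1)⟩
  have hF : (¬ ∀ (d : ℕ) (_ : 1 < d) (hd2 : d + 1 < n), CutCond k y d (Nat.lt_of_succ_lt hd2)) →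
      Tk k y ≠ Sset y ∧ Mk k y ≠ Sset y := fun h => by
    push Not at h
    obtain ⟨d, hd1, hd2, hcut⟩ := h
    obtain ⟨⟨x, hx, hxS⟩, z, hz, hzS⟩ :=
      exists_mem_tk_mk_of_not_cutCond hk hy hypos (by omega) (by omega) hcut
    exact ⟨fun h => hxS (h ▸ hx), fun h => hzS (h ▸ hz)⟩
  change _ ∧ (_ ↔ ∀ (d : ℕ) (_ : 1 < d) (hd2 : d + 1 < n), CutCond k y d (Nat.lt_of_succ_lt hd2))
  by_cases h : ∀ (d : ℕ) (_ : 1 < d) (hd2 : d + 1 < n), CutCond k y d (Nat.lt_of_succ_lt hd2)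
  · obtain ⟨h1, h2⟩ := hT h
    exact ⟨iff_of_true h1 h2, iff_of_true h1 h⟩
  · obtain ⟨h1, h2⟩ := hF h
    exact ⟨iff_of_false h1 h2, iff_of_false h1 h⟩

end
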